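/- Let q = r^2 with r an odd prime power. Suppose q − 1 = e_1 f_1 = e_2 f_2, there exists an integer l ≥ 2 with e_1 ≡ 2^l (mod 2^{l+1}) and 2^l | e_2, and that 2e_2 | e_1(r+1) and e_1 | e_2(r−1). Let s, t be integers with 1 ≤ s ≤ D_1 and 1 ≤ t ≤ D_2, and set n_1 = s·f_1 + t·f_2. If the integer t·e_1(r+1)/(2e_2) + t(r+1)/2 is even, 4 | (t−1)(r+1), and n_1 is even, then there exists an MDS self-dual code over F_q of length n_1 + 2, i.e., a linear code C ⊆ F_q^{n_1+2} with C = C⊥, dim C = (n_1+2)/2, and minimum Hamming distance (n_1+2)/2 + 1. -/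

import Mathlib

/-- The Euclidean dual of a linear code `C ⊆ F^n`. -/
def dualCode {F : Type*} [Field F] {n : ℕ} (C : Submodule F (Fin n → F)) :
    Submodule F (Fin n → F) where
  carrier := {x | ∀ c ∈ C, ∑ i, x i * c i = 0}
  add_mem' := by
    intro a b ha hb c hc
    simp only [Set.mem_setOf_eq] at ha hb ⊢
    simp [Pi.add_apply, add_mul, Finset.sum_add_distrib, ha c hc, hb c hc]
  zero_mem' := by intro c hc; simp
  smul_mem' := by
    intro r a ha c hc
    simp only [Set.mem_setOf_eq] at ha ⊢
    simp [Pi.smul_apply, smul_eq_mul, mul_assoc, ← Finset.mul_sum, ha c hc]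

/-- `C` has minimum Hamming distance `d`. -/
def IsMinDist {F : Type*} [Field F] [DecidableEq F] {n : ℕ}
    (C : Submodule F (Fin n → F)) (d : ℕ) : Prop :=
  (∀ c ∈ C, c ≠ 0 → d ≤ hammingNorm c) ∧ ∃ c ∈ C, c ≠ 0 ∧ hammingNorm c = d


open Polynomial in
lemma code_exists {F : Type*} [Field F] [DecidableEq F] (N k : ℕ) (hk : N + 1 = 2 * k)
    (a : Fin N → F) (ha : Function.Injective a) (v : Fin N → F)
    (hv : ∀ i, v i ^ 2 * ∏ j ∈ Finset.univ.erase i, (a i - a j) = -1) :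
    ∃ C : Submodule F (Fin (N + 1) → F),
      dualCode C = C ∧ Module.finrank F C = k ∧ IsMinDist C (k + 1) := by
  have hv0 : ∀ i, v i ≠ 0 := by
    intro i h
    have := hv i
    rw [h] at this
    simp at this
  let E0 : F[X] →ₗ[F] (Fin (N + 1) → F) :=
    { toFun := fun f => Fin.snoc (α := fun _ => F) (fun i => v i * f.eval (a i)) (f.coeff (k - 1))
      map_add' := by
        intro f g
        ext i
        refine Fin.lastCases ?_ (fun i => ?_) i
        · simp
        · simp [mul_add]
      map_smul' := by
        intro c f
        ext i
        refine Fin.lastCases ?_ (fun i => ?_) i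
        · simp
        · simp
          ring }
  have E0c : ∀ f i, E0 f (Fin.castSucc i) = v i * f.eval (a i) := by
    intro f i
    simp [E0]
  have E0l : ∀ f, E0 f (Fin.last N) = f.coeff (k - 1) := by
    intro f
    simp [E0]
  have hwt : ∀ f, hammingNorm (E0 f) + ((Finset.univ.filter (fun i => f.eval (a i) = 0)).card
      + (if f.coeff (k-1) = 0 then 1 else 0)) = N + 1 := by
    intro f
    have h1 : hammingNorm (E0 f) = ∑ i, if E0 f i ≠ 0 then 1 else 0 := by
      rw [hammingNorm, Finset.card_filter]
    rw [h1, Fin.sum_univ_castSucc, E0l, Finset.card_filter]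
    simp only [E0c]
    have h2 : (∑ i, if v i * f.eval (a i) ≠ 0 then 1 else 0) +
        (∑ i, if f.eval (a i) = 0 then 1 else 0) = N := by
      rw [← Finset.sum_add_distrib, Finset.sum_congr rfl (g := fun _ => 1)]
      · simp
      · intro i _
        by_cases h : f.eval (a i) = 0 <;> simp [h, hv0 i]
    have h3 : (if f.coeff (k-1) ≠ 0 then 1 else 0) + (if f.coeff (k-1) = 0 then 1 else 0) = 1 := by
      by_cases h : f.coeff (k-1) = 0 <;> simp [h]
    omega
  have hnat : ∀ f ∈ degreeLT F k, f ≠ 0 → f.natDegree < k := by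
    intro f hf h0
    rw [mem_degreeLT] at hf
    exact (natDegree_lt_iff_degree_lt h0).2 hf
  have hroots : ∀ f : F[X], f ≠ 0 → 
      (Finset.univ.filter (fun i => f.eval (a i) = 0)).card ≤ f.natDegree := by
    intro f h0
    rw [← Finset.card_image_of_injective _ ha]
    refine le_trans ?_ (card_roots' f)
    refine le_trans (Finset.card_le_card (t := f.roots.toFinset) ?_) (Multiset.toFinset_card_le _)
    intro x hx
    simp only [Finset.mem_image, Finset.mem_filter, Finset.mem_univ, true_and] at hx
    obtain ⟨i, hi, rfl⟩ := hx
    simp [h0, hi]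
  have hlow : ∀ f ∈ degreeLT F k, f ≠ 0 → k + 1 ≤ hammingNorm (E0 f) := by
    intro f hf h0
    have h1 := hwt f
    have h2 := hnat f hf h0
    have h3 := hroots f h0
    by_cases h : f.coeff (k-1) = 0
    · have : f.natDegree ≠ k - 1 := by
        intro h'
        rw [← h'] at h
        exact h0 (leadingCoeff_eq_zero.1 h)
      simp only [h, if_true] at h1
      omega
    · simp only [h, if_false] at h1
      omega
  let E : degreeLT F k →ₗ[F] (Fin (N + 1) → F) := E0.comp (degreeLT F k).subtype
  have hinj : Function.Injective E := by
    rw [← LinearMap.ker_eq_bot, LinearMap.ker_eq_bot']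
    rintro ⟨f, hf⟩ h
    by_contra h0
    have h0' : f ≠ 0 := fun h' => h0 (by simp [h'])
    have := hlow f hf h0'
    have h' : E0 f = 0 := h
    rw [h'] at this
    simp at this
  have hrank : Module.finrank F (LinearMap.range E) = k := by
    rw [LinearMap.finrank_range_of_inj hinj, (degreeLTEquiv F k).finrank_eq]
    simp
  have horth : ∀ f ∈ degreeLT F k, ∀ g ∈ degreeLT F k, ∑ i, E0 f i * E0 g i = 0 := by
    intro f hf g hg
    rw [Fin.sum_univ_castSucc, E0l, E0l]
    simp only [E0c]
    have hk1 : 1 ≤ k := by omega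
    have hfg : (f * g).degree < (Finset.univ : Finset (Fin N)).card := by
      by_cases h0 : f = 0
      · simp [h0]
      by_cases h0' : g = 0
      · simp [h0']
      have h1 := hnat f hf h0
      have h2 := hnat g hg h0'
      rw [← natDegree_lt_iff_degree_lt (mul_ne_zero h0 h0'), natDegree_mul h0 h0']
      simp
      omega
    have h1 := Lagrange.coeff_eq_sum (s := Finset.univ) (v := a) ha.injOn hfg
    have h2 : (f * g).coeff ((Finset.univ : Finset (Fin N)).card - 1)
        = f.coeff (k-1) * g.coeff (k-1) := by
      have : (Finset.univ : Finset (Fin N)).card - 1 = (k-1) + (k-1) := by simp; omega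
      rw [this]
      apply coeff_mul_add_eq_of_natDegree_le
      · by_cases h0 : f = 0
        · simp [h0]
        · have := hnat f hf h0
          omega
      · by_cases h0 : g = 0
        · simp [h0]
        · have := hnat g hg h0
          omega
    rw [← h2, h1, ← Finset.sum_add_distrib]
    apply Finset.sum_eq_zero
    intro i _
    have h3 := hv i
    have h4 : ∏ j ∈ Finset.univ.erase i, (a i - a j) ≠ 0 := by
      intro h
      rw [h] at h3
      simp at h3
    field_simp
    rw [eval_mul]
    linear_combination (eval (a i) f * eval (a i) g) * h3
  have hle : LinearMap.range E ≤ dualCode (LinearMap.range E) := by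
    rintro _ ⟨⟨f, hf⟩, rfl⟩
    rintro _ ⟨⟨g, hg⟩, rfl⟩
    exact horth f hf g hg
  have hdual : Module.finrank F (dualCode (LinearMap.range E)) = k := by
    let B : LinearMap.BilinForm F (Fin (N+1) → F) := dotProductBilin F F
    have hB : dualCode (LinearMap.range E) = B.orthogonal (LinearMap.range E) := by
      ext x
      rw [LinearMap.BilinForm.mem_orthogonal_iff]
      constructor
      · intro h c hc
        have := h c hc
        simp only [B, dotProductBilin_apply_apply, dotProduct]
        simpa [mul_comm] using this
      · intro h c hc
        have := h c hc
        simp only [B, dotProductBilin_apply_apply, dotProduct] at this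
        simpa [mul_comm] using this
    have hnd : B.Nondegenerate := by
      constructor
      · intro x hx
        exact dotProduct_eq_zero x hx
      · intro x hx
        refine dotProduct_eq_zero x fun w => ?_
        rw [dotProduct_comm]
        exact hx w
    rw [hB, LinearMap.BilinForm.finrank_orthogonal hnd, hrank]
    simp
    omega
  refine ⟨LinearMap.range E, ?_, hrank, ?_, ?_⟩
  · exact (Submodule.eq_of_le_of_finrank_eq hle (by rw [hrank, hdual])).symm
  · rintro _ ⟨⟨f, hf⟩, rfl⟩ h0
    apply hlow f hf
    rintro rfl
    exact h0 (by simp [E])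
  · let f := Lagrange.nodal (Finset.univ.filter (fun i : Fin N => i.val < k - 1)) a
    have hcard : (Finset.univ.filter (fun i : Fin N => i.val < k - 1)).card = k - 1 := by
      rw [Fin.card_filter_val_lt]
      omega
    have hf : f ∈ degreeLT F k := by
      rw [mem_degreeLT, Lagrange.degree_nodal, hcard]
      norm_cast
      omega
    have hf0 : f ≠ 0 := Lagrange.nodal_ne_zero
    have h1 := hlow f hf hf0
    have h2 := hwt f
    have h3 : k - 1 ≤ (Finset.univ.filter (fun i => f.eval (a i) = 0)).card := by
      rw [← hcard]
      apply Finset.card_le_card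
      intro i hi
      simp only [Finset.mem_filter, Finset.mem_univ, true_and]
      exact Lagrange.eval_nodal_at_node hi
    refine ⟨E0 f, ⟨⟨f, hf⟩, rfl⟩, ?_, ?_⟩
    · intro h
      rw [h] at h1
      simp at h1
    · omega

open Polynomial in
lemma code_of_poly {F : Type*} [Field F] [DecidableEq F] (N k : ℕ) (hk : N + 1 = 2 * k)
    (P : F[X]) (hm : P.Monic) (hs : P.Splits) (hdeg : P.natDegree = N)
    (hder : ∀ x, P.eval x = 0 →
      P.derivative.eval x ≠ 0 ∧ IsSquare (-(P.derivative.eval x))) :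
    ∃ C : Submodule F (Fin (N + 1) → F),
      dualCode C = C ∧ Module.finrank F C = k ∧ IsMinDist C (k + 1) := by
  have hnd : P.roots.Nodup := by
    rw [Multiset.nodup_iff_count_le_one]
    intro x
    rw [count_roots]
    by_contra h
    push Not at h
    rw [one_lt_rootMultiplicity_iff_isRoot hm.ne_zero] at h
    exact (hder x h.1).1 h.2
  have hcard : P.roots.toFinset.card = N := by
    rw [Multiset.toFinset_card_of_nodup hnd, ← hs.natDegree_eq_card_roots, hdeg]
  let e := (Finset.equivFinOfCardEq hcard).symm
  let a : Fin N → F := fun i => (e i : F)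
  have ha : Function.Injective a := Subtype.val_injective.comp e.injective
  have hP : P = Lagrange.nodal Finset.univ a := by
    rw [Lagrange.nodal_eq]
    conv_lhs => rw [hs.eq_prod_roots_of_monic hm]
    have h1 : P.roots = P.roots.toFinset.val := by
      rw [Multiset.toFinset_val, hnd.dedup]
    rw [h1]
    change ∏ x ∈ P.roots.toFinset, (X - C x) = _
    rw [← Finset.prod_coe_sort]
    exact (Equiv.prod_comp e (fun x : P.roots.toFinset => X - C (x : F))).symm
  have hroot : ∀ i, P.eval (a i) = 0 := by
    intro i
    rw [hP]
    exact Lagrange.eval_nodal_at_node (Finset.mem_univ i)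
  have hd : ∀ i, P.derivative.eval (a i) = ∏ j ∈ Finset.univ.erase i, (a i - a j) := by
    intro i
    rw [hP, Lagrange.eval_nodal_derivative_eval_node_eq (Finset.mem_univ i), Lagrange.eval_nodal]
  choose y hy using fun i => (hder (a i) (hroot i)).2
  refine code_exists N k hk a ha (fun i => (y i)⁻¹) ?_
  intro i
  have h0 := (hder (a i) (hroot i)).1
  rw [← hd]
  have := hy i
  have hy0 : y i ≠ 0 := by
    intro h
    rw [h] at this
    simp at this
    exact h0 this
  field_simp
  linear_combination -this

open Polynomial in
lemma splits_aux {F : Type*} [Field F] [Fintype F] (f : ℕ) (hf : f ∣ Fintype.card F - 1)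
    (c : F) (hc : c ≠ 0) : (X ^ f - C (c ^ f) : F[X]).Splits := by
  have h1 : (X ^ (Fintype.card F) - X : F[X]).Splits := by
    rw [splits_iff_card_roots, FiniteField.roots_X_pow_card_sub_X,
      FiniteField.X_pow_card_sub_X_natDegree_eq F Fintype.one_lt_card]
    rfl
  refine h1.of_dvd (FiniteField.X_pow_card_sub_X_ne_zero F Fintype.one_lt_card) ?_
  obtain ⟨m, hm⟩ := hf
  have h2 : (X ^ (Fintype.card F) - X : F[X]) = X * ((X ^ f) ^ m - (C (c ^ f)) ^ m) := by
    rw [← C_pow, ← pow_mul, ← pow_mul, ← hm, FiniteField.pow_card_sub_one_eq_one c hc]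
    have : Fintype.card F = Fintype.card F - 1 + 1 := by
      have := Fintype.one_lt_card (α := F)
      omega
    conv_lhs => rw [this]
    rw [pow_succ]
    simp
    ring
  rw [h2]
  exact (sub_dvd_pow_sub_pow _ _ m).mul_left _

/-- the polynomial with roots the cosets -/
noncomputable def cosetPoly {F : Type*} [Field F] (s f : ℕ) (c : ℕ → F) : Polynomial F :=
  (Lagrange.nodal (Finset.range s) c).comp (Polynomial.X ^ f)

open Polynomial in
lemma cosetPoly_eq {F : Type*} [Field F] (s f : ℕ) (c : ℕ → F) :
    cosetPoly s f c = ∏ i ∈ Finset.range s, (X ^ f - C (c i)) := by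
  rw [cosetPoly, Lagrange.nodal_eq, prod_comp]
  simp

open Polynomial in
lemma cosetPoly_monic {F : Type*} [Field F] (s f : ℕ) (hf : f ≠ 0) (c : ℕ → F) :
    (cosetPoly s f c).Monic := by
  rw [cosetPoly_eq]
  exact monic_prod_of_monic _ _ fun i _ => monic_X_pow_sub_C _ hf

open Polynomial in
lemma cosetPoly_natDegree {F : Type*} [Field F] (s f : ℕ) (c : ℕ → F) :
    (cosetPoly s f c).natDegree = s * f := by
  rw [cosetPoly, natDegree_comp, Lagrange.natDegree_nodal]
  simp

lemma cosetPoly_eval {F : Type*} [Field F] (s f : ℕ) (c : ℕ → F) (x : F) :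
    (cosetPoly s f c).eval x = ∏ i ∈ Finset.range s, (x ^ f - c i) := by
  rw [cosetPoly, Polynomial.eval_comp, Lagrange.eval_nodal]
  simp

lemma cosetPoly_deriv {F : Type*} [Field F] (s f : ℕ) (c : ℕ → F) (x : F) (i : ℕ) (hi : i < s)
    (hx : x ^ f = c i) : (cosetPoly s f c).derivative.eval x =
      f * x ^ (f - 1) * ∏ j ∈ (Finset.range s).erase i, (c i - c j) := by
  rw [cosetPoly, Polynomial.derivative_comp, Polynomial.eval_mul, Polynomial.eval_comp]
  simp only [Polynomial.eval_pow, Polynomial.eval_X, hx]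
  rw [Lagrange.eval_nodal_derivative_eval_node_eq (Finset.mem_range.2 hi), Lagrange.eval_nodal]
  simp [Polynomial.derivative_X_pow]

lemma cosetPoly_splits {F : Type*} [Field F] [Fintype F] (s f : ℕ)
    (hf : f ∣ Fintype.card F - 1) (c : ℕ → F) (hc : ∀ i, c i ≠ 0) :
    (cosetPoly s f (fun i => c i ^ f)).Splits := by
  rw [cosetPoly_eq]
  exact Polynomial.Splits.prod fun i _ => splits_aux f hf _ (hc i)

/-- Theorem 3.3(3): if `(r+1)/2·(t·e₁/e₂ + t)` is even, `4 ∣ (t−1)(r+1)` and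
`n₁ = s·f₁ + t·f₂` is even, there is a `q`-ary MDS self-dual code of length `n₁ + 2`,
where `q = r²`. -/
theorem mds_self_dual_thm3_even_length_add_two
    (r e1 f1 e2 f2 s t l : ℕ)
    (hr_odd : Odd r) (hr_pp : IsPrimePow r)
    (hq1 : r ^ 2 - 1 = e1 * f1) (hq2 : r ^ 2 - 1 = e2 * f2)
    (hl : 2 ≤ l) (he1 : e1 % 2 ^ (l + 1) = 2 ^ l) (he2 : 2 ^ l ∣ e2)
    (hdvd1 : 2 * e2 ∣ e1 * (r + 1)) (hdvd2 : e1 ∣ e2 * (r - 1))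
    (hs1 : 1 ≤ s) (hs2 : s ≤ e1 / Nat.gcd e1 e2)
    (ht1 : 1 ≤ t) (ht2 : t ≤ e2 / Nat.gcd e1 e2)
    (heven : Even (t * e1 * (r + 1) / (2 * e2) + t * (r + 1) / 2))
    (h4 : 4 ∣ (t - 1) * (r + 1))
    (hn1 : Even (s * f1 + t * f2))
    (F : Type*) [Field F] [Fintype F] [DecidableEq F]
    (hF : Fintype.card F = r ^ 2) :
    ∃ C : Submodule F (Fin (s * f1 + t * f2 + 2) → F),
      dualCode C = C ∧
      Module.finrank F C = (s * f1 + t * f2 + 2) / 2 ∧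
      IsMinDist C ((s * f1 + t * f2 + 2) / 2 + 1) := by
  have hr1 : 1 < r := hr_pp.one_lt
  obtain ⟨ρ, hρ⟩ := hr_odd
  obtain ⟨R, hR⟩ : ∃ R, R = ρ + 1 := ⟨_, rfl⟩
  obtain ⟨M, hM⟩ : ∃ M, M = (r - 1) * R := ⟨_, rfl⟩
  have hr2 : r - 1 = 2 * ρ := by omega
  have hrR : r + 1 = 2 * R := by omega
  have hrr : r - 1 + 1 = r := by omega
  have hq : r ^ 2 - 1 = 2 * M := by
    have : r ^ 2 = 2 * M + 1 := by
      rw [hM, hr2, hR, hρ]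
      ring
    omega
  have hq' : r ^ 2 = 2 * M + 1 := by
    have : 1 ≤ r ^ 2 := Nat.one_le_pow _ _ (by omega)
    omega
  have hρ0 : 0 < ρ := by omega
  have hM0 : 0 < M := by
    rw [hM, hr2, hR]
    positivity
  have hMe : Even M := by
    rw [hM, hr2]
    exact ⟨ρ * R, by ring⟩
  rw [hq] at hq1 hq2
  have he1p : 0 < e1 := Nat.pos_of_ne_zero (by rintro rfl; simp at hq1; omega)
  have he2p : 0 < e2 := Nat.pos_of_ne_zero (by rintro rfl; simp at hq2; omega)
  have hf1p : 0 < f1 := Nat.pos_of_ne_zero (by rintro rfl; simp at hq1; omega)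
  have hf2p : 0 < f2 := Nat.pos_of_ne_zero (by rintro rfl; simp at hq2; omega)
  -- e1 = 2 h, e2 = 2^l * e2'
  obtain ⟨h, u, hh, hhu⟩ : ∃ h u, e1 = 2 * h ∧ h = 2 ^ (l - 1) * (2 * u + 1) := by
    refine ⟨2 ^ (l - 1) * (2 * (e1 / 2 ^ (l + 1)) + 1), e1 / 2 ^ (l + 1), ?_, rfl⟩
    have h1 := Nat.div_add_mod e1 (2 ^ (l + 1))
    rw [he1] at h1
    have h2 : l = (l - 1) + 1 := by omega
    have h3 : 2 ^ l = 2 * 2 ^ (l - 1) := by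
      conv_lhs => rw [h2]
      rw [pow_succ]
      ring
    rw [pow_succ, h3] at h1
    rw [pow_succ, h3]
    nth_rewrite 1 [← h1]
    ring
  have h2l : 2 ^ l = 2 * 2 ^ (l - 1) := by
    have h2 : l = (l - 1) + 1 := by omega
    conv_lhs => rw [h2]
    rw [pow_succ]
    ring
  have hheven : Even h := by
    rw [hhu]
    refine Even.mul_right ?_ _
    rw [Nat.even_pow]
    exact ⟨by decide, by omega⟩
  have he2even : Even e2 := by
    refine even_iff_two_dvd.2 (dvd_trans ?_ he2)
    rw [h2l]
    exact dvd_mul_right _ _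
  -- E
  obtain ⟨E, hE⟩ := hdvd1
  have hE' : 2 * (h * R) = e2 * E := by
    rw [hh, hrR] at hE
    have : 2 * (2 * (h * R)) = 2 * (e2 * E) := by linear_combination hE
    omega
  obtain ⟨κ, hκ⟩ := hdvd2
  have heven' : Even (t * E + t * R) := by
    have h1 : t * e1 * (r + 1) / (2 * e2) = t * E := by
      rw [mul_assoc, hE]
      have : t * (2 * e2 * E) = (2 * e2) * (t * E) := by ring
      rw [this, Nat.mul_div_cancel_left _ (by omega)]
    have h2 : t * (r + 1) / 2 = t * R := by
      rw [hrR]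
      have : t * (2 * R) = 2 * (t * R) := by ring
      rw [this, Nat.mul_div_cancel_left _ (by omega)]
    rwa [h1, h2] at heven
  have h4' : Even (R * (t - 1)) := by
    obtain ⟨c, hc⟩ := h4
    rw [hrR] at hc
    refine ⟨c, ?_⟩
    have : 2 * (R * (t - 1)) = 2 * (c + c) := by linear_combination hc
    omega
  -- field facts
  obtain ⟨g0, hg0⟩ := IsCyclic.exists_generator (α := Fˣ)
  have hord0 : orderOf g0 = 2 * M := by
    rw [orderOf_eq_card_of_forall_mem_zpowers hg0, Nat.card_eq_fintype_card, Fintype.card_units, hF, hq]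
  obtain ⟨g, hg⟩ : ∃ g : F, g = (g0 : F) := ⟨_, rfl⟩
  have hg_ne : g ≠ 0 := by rw [hg]; exact g0.ne_zero
  have hord : orderOf g = 2 * M := by rw [hg, orderOf_units, hord0]
  have hpow : ∀ a b, g ^ a = g ^ b → a ≡ b [MOD 2 * M] := by
    intro a b hab
    rw [← hord]
    have : g0 ^ a = g0 ^ b := by
      ext
      push_cast
      rw [← hg]
      exact hab
    have := pow_eq_pow_iff_modEq.1 this
    rwa [← orderOf_units, ← hg] at this
  have hpow1 : ∀ a, 2 * M ∣ a → g ^ a = 1 := by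
    intro a ha
    rw [← hord] at ha
    exact orderOf_dvd_iff_pow_eq_one.1 ha
  have hpow1' : ∀ a, g ^ a = 1 → 2 * M ∣ a := by
    intro a ha
    rw [← hord]
    exact orderOf_dvd_iff_pow_eq_one.2 ha
  have hsurj : ∀ x : F, x ≠ 0 → ∃ n : ℕ, x = g ^ n := by
    intro x hx
    have h1 := hg0 (Units.mk0 x hx)
    rw [mem_zpowers_iff_mem_range_orderOf] at h1
    simp only [Finset.mem_image, Finset.mem_range] at h1
    obtain ⟨n, _, hn⟩ := h1
    refine ⟨n, ?_⟩
    have := congrArg Units.val hn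
    push_cast at this
    rw [hg, this]
    rfl
  have hroot : ∀ e f b : ℕ, 2 * M = e * f → ∀ x : F, x ^ f = (g ^ b) ^ f →
      ∃ m, x = g ^ (b + e * m) := by
    intro e f b hef x hx
    have hf0 : 0 < f := Nat.pos_of_ne_zero (by rintro rfl; simp at hef; omega)
    have hx0 : x ≠ 0 := by
      rintro rfl
      rw [zero_pow hf0.ne'] at hx
      exact pow_ne_zero _ (pow_ne_zero _ hg_ne) hx.symm
    have hb0 : g ^ b ≠ 0 := pow_ne_zero _ hg_ne
    obtain ⟨n, hn⟩ := hsurj (x / g ^ b) (div_ne_zero hx0 hb0)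
    have h1 : g ^ (n * f) = 1 := by
      rw [pow_mul, ← hn, div_pow, hx, div_self (pow_ne_zero _ hb0)]
    have h2 := hpow1' _ h1
    rw [hef] at h2
    obtain ⟨m, hm⟩ := Nat.dvd_of_mul_dvd_mul_right hf0 h2
    refine ⟨m, ?_⟩
    rw [pow_add, ← hm, ← hn]
    field_simp
  have hgM : g ^ M = -1 := by
    have h1 : (g ^ M) ^ 2 = 1 := by
      rw [← pow_mul]
      exact hpow1 _ ⟨1, by ring⟩
    rcases sq_eq_sq_iff_eq_or_eq_neg.1 (h1.trans (one_pow 2).symm) with h2 | h2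
    · exfalso
      have := Nat.le_of_dvd hM0 (hpow1' _ h2)
      omega
    · exact h2
  have hneg : ((-1 : F)) ^ M = 1 := hMe.neg_one_pow
  obtain ⟨p, κ', hp, hκ', hpr⟩ := hr_pp
  have hp' : p.Prime := hp.nat_prime
  have hcp : CharP F p := by
    obtain ⟨p', hc, n, hp'', hcard⟩ := FiniteField.card' F
    rw [hF, ← hpr, ← pow_mul] at hcard
    have h1 : p' ∣ p ^ (κ' * 2) := by
      rw [hcard]
      exact dvd_pow_self _ n.pos.ne'
    have h2 := (Nat.prime_dvd_prime_iff_eq hp'' hp').1 (hp''.dvd_of_dvd_pow h1)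
    rwa [h2] at hc
  haveI : Fact p.Prime := ⟨hp'⟩
  haveI : ExpChar F p := ExpChar.prime hp'
  have hsub : ∀ x y : F, (x - y) ^ r = x ^ r - y ^ r := by
    intro x y
    rw [← hpr]
    exact sub_pow_expChar_pow x y κ'
  have hcast : ∀ n : ℕ, (n : F) ^ r = n := by
    intro n
    rw [← hpr]
    exact map_natCast (iterateFrobenius F p κ') n
  have hchar : ringChar F ≠ 2 := by
    intro h2
    have := FiniteField.even_card_of_char_two h2
    rw [hF] at this
    omega
  have hFr : ∀ x : F, x ≠ 0 → x ^ r = x → x ^ M = 1 := by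
    intro x hx hxr
    have : x ^ (r - 1) = 1 := by
      apply mul_right_cancel₀ hx
      rw [← pow_succ, hrr, hxr, one_mul]
    rw [hM, pow_mul, this, one_pow]
  have hfne : ∀ e f : ℕ, 2 * M = e * f → (f : F) ≠ 0 := by
    intro e f hef h0
    have h1 : ((Fintype.card F : ℕ) : F) = 0 := FiniteField.cast_card_eq_zero F
    rw [hF, hq', hef] at h1
    push_cast at h1
    rw [h0] at h1
    simp at h1
  have hfM : ∀ e f : ℕ, 2 * M = e * f → (f : F) ^ M = 1 := fun e f hef =>
    hFr _ (hfne e f hef) (hcast f)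
  have hgr : ∀ n, 2 * M ∣ n * (r - 1) → (g ^ n) ^ r = g ^ n := by
    intro n hn
    have : (g ^ n) ^ r = g ^ (n * (r - 1)) * g ^ n := by
      rw [← pow_mul, ← pow_add]
      congr 1
      conv_lhs => rw [← hrr]
      ring
    rw [this, hpow1 _ hn, one_mul]
  have hgsq : ∀ n, Even n → (g ^ n) ^ M = 1 := by
    rintro n ⟨c, hc⟩
    rw [← pow_mul]
    exact hpow1 _ ⟨c, by rw [hc]; ring⟩
  have hfinal : ∀ x : F, x ^ M = 1 → x ≠ 0 ∧ IsSquare (-x) := by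
    intro x hx
    have hx0 : x ≠ 0 := by
      rintro rfl
      rw [zero_pow hM0.ne'] at hx
      exact zero_ne_one hx
    refine ⟨hx0, ?_⟩
    rw [FiniteField.isSquare_iff hchar (neg_ne_zero.2 hx0), hF]
    have : r ^ 2 / 2 = M := by omega
    rw [this, hMe.neg_pow, hx]
  -- w
  obtain ⟨w, hw⟩ : ∃ w, w = g ^ (h * f2) := ⟨_, rfl⟩
  have hwR : w ^ R = (-1) ^ E := by
    rw [hw, ← hgM, ← pow_mul, ← pow_mul]
    congr 1
    have : 2 * (h * f2 * R) = 2 * (M * E) := by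
      linear_combination f2 * hE' - E * hq2
    omega
  have hnorm : ∀ m, (w ^ m) ^ (r + 1) = 1 := by
    intro m
    have h1 : (w ^ m) ^ (r + 1) = (w ^ R) ^ (2 * m) := by
      rw [← pow_mul, ← pow_mul, hrR]
      congr 1
      ring
    rw [h1, hwR, ← pow_mul]
    exact Even.neg_one_pow ⟨E * m, by ring⟩
  have hdiff : ∀ m n, w ^ m ≠ w ^ n →
      (w ^ m - w ^ n) ^ M * (-1) ^ (E * (m + n)) = (-1) ^ R := by
    intro m n hmn
    have hx : w ^ m - w ^ n ≠ 0 := sub_ne_zero.2 hmn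
    have h1 : (w ^ m - w ^ n) ^ (r - 1) * (w ^ m * w ^ n) = -1 := by
      apply mul_right_cancel₀ hx
      have h2 := hsub (w ^ m) (w ^ n)
      have h3 := hnorm m
      have h4 := hnorm n
      rw [pow_succ] at h3 h4
      have h5 : (w ^ m - w ^ n) ^ (r - 1) * (w ^ m - w ^ n) = (w ^ m - w ^ n) ^ r := by
        rw [← pow_succ, hrr]
      linear_combination (w ^ m * w ^ n) * h5 + (w ^ m * w ^ n) * h2 + w ^ n * h3 - w ^ m * h4
    have h2 : (-1 : F) ^ (E * (m + n)) = (w ^ m * w ^ n) ^ R := by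
      rw [pow_mul, ← hwR, ← pow_add, ← pow_mul, ← pow_mul, mul_comm]
    rw [h2, hM, pow_mul, ← mul_pow, h1]
  have hdisj : ∀ m j, w ^ (2 * m) ≠ w ^ (2 * j + 1) := by
    intro m j hmj
    rw [hw, ← pow_mul, ← pow_mul] at hmj
    have h1 := hpow _ _ hmj
    rw [hq2, mul_comm e2 f2] at h1
    have h2 : f2 * (h * (2 * m)) ≡ f2 * (h * (2 * j + 1)) [MOD f2 * e2] := by
      convert h1 using 1 <;> ring
    have h3 := Nat.ModEq.mul_left_cancel' hf2p.ne' h2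
    have h4 := h3.of_dvd he2
    rw [h2l, hhu] at h4
    have h5 : 2 ^ (l - 1) * ((2 * u + 1) * (2 * m)) ≡ 2 ^ (l - 1) * ((2 * u + 1) * (2 * j + 1))
        [MOD 2 ^ (l - 1) * 2] := by
      convert h4 using 1 <;> ring
    have h6 := Nat.ModEq.mul_left_cancel' (by positivity) h5
    unfold Nat.ModEq at h6
    have h7 : (2 * u + 1) * (2 * m) = 2 * ((2 * u + 1) * m) := by ring
    have h8 : (2 * u + 1) * (2 * j + 1) = 2 * ((2 * u + 1) * j + u) + 1 := by ring
    rw [h7, h8] at h6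
    omega
  -- distinctness of coset representatives
  have hdist : ∀ e e' f b n i j : ℕ, 2 * M = e * f → 0 < e → 0 < f → n ≤ e / Nat.gcd e e' →
      i < n → j < n → g ^ (b + e' * i * f) = g ^ (b + e' * j * f) → i = j := by
    intro e e' f b n i j hef he hf hn hi hj hij
    have h1 := Nat.ModEq.add_left_cancel' b (hpow _ _ hij)
    rw [hef] at h1
    have h2 := Nat.ModEq.mul_right_cancel' hf.ne' h1
    have h3 := Nat.ModEq.cancel_left_div_gcd he h2
    exact Nat.ModEq.eq_of_lt_of_lt h3 (by omega) (by omega)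
  have hdw : ∀ j, (g ^ (h * (2 * j + 1))) ^ f2 = w ^ (2 * j + 1) := by
    intro j
    rw [hw, ← pow_mul, ← pow_mul]
    congr 1
    ring
  have hcr : ∀ i, ((g ^ (e2 * i)) ^ f1) ^ r = (g ^ (e2 * i)) ^ f1 := by
    intro i
    rw [← pow_mul g]
    apply hgr
    rw [hq1]
    exact ⟨κ * i, by linear_combination (i * f1) * hκ⟩
  have hcne : ∀ i, i < s → ∀ j, j < s → i ≠ j → (g ^ (e2 * i)) ^ f1 ≠ (g ^ (e2 * j)) ^ f1 := by
    intro i hi j hj hij heq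
    apply hij
    apply hdist e1 e2 f1 0 s i j hq1 he1p hf1p hs2 hi hj
    rw [zero_add, zero_add, pow_mul g (e2 * i), pow_mul g (e2 * j), heq]
  have hdne : ∀ i, i < t → ∀ j, j < t → i ≠ j → w ^ (2 * i + 1) ≠ w ^ (2 * j + 1) := by
    intro i hi j hj hij heq
    apply hij
    rw [Nat.gcd_comm] at ht2
    apply hdist e2 e1 f2 (h * f2) t i j hq2 he2p hf2p ht2 hi hj
    rw [hw, ← pow_mul, ← pow_mul] at heq
    rw [hh]
    convert heq using 2 <;> ring
  have hsumM : ∀ x y : F, x ≠ y → x ^ r = x → y ^ r = y → (x - y) ^ M = 1 := by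
    intro x y hxy hx hy
    apply hFr _ (sub_ne_zero.2 hxy)
    rw [hsub, hx, hy]
  -- roots
  have hrA : ∀ x i, x ^ f1 = (g ^ (e2 * i)) ^ f1 → ∃ m, x ^ f2 = w ^ (2 * m) := by
    intro x i hx
    obtain ⟨m, rfl⟩ := hroot e1 f1 (e2 * i) hq1 x hx
    refine ⟨m, ?_⟩
    rw [hw, ← pow_mul, ← pow_mul]
    have : (e2 * i + e1 * m) * f2 = e2 * f2 * i + h * f2 * (2 * m) := by
      rw [hh]
      ring
    rw [this, pow_add, hpow1 _ ⟨i, by rw [hq2]⟩, one_mul]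
  have hrB : ∀ x j, x ^ f2 = w ^ (2 * j + 1) → (x ^ f1) ^ r = x ^ f1 := by
    intro x j hx
    rw [← hdw] at hx
    obtain ⟨m, rfl⟩ := hroot e2 f2 _ hq2 x hx
    rw [← pow_mul g]
    apply hgr
    refine ⟨ρ * (2 * j + 1) + κ * m, ?_⟩
    rw [hr2] at hκ ⊢
    rw [hh] at hq1 hκ
    rw [hq1]
    linear_combination (m * f1) * hκ
  have hABne : ∀ x i j, x ^ f1 = (g ^ (e2 * i)) ^ f1 → x ^ f2 ≠ w ^ (2 * j + 1) := by
    intro x i j hx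
    obtain ⟨m, hm⟩ := hrA x i hx
    rw [hm]
    exact hdisj m j
  have hwsq : ∀ j, (w ^ (2 * j + 1)) ^ M = 1 := by
    intro j
    rw [hw, ← pow_mul g]
    exact hgsq _ ((hheven.mul_right _).mul_right _)
  have hcM : ∀ i, ((g ^ (e2 * i)) ^ f1) ^ M = 1 := by
    intro i
    rw [← pow_mul g]
    exact hgsq _ ((he2even.mul_right _).mul_right _)
  obtain ⟨k, hk⟩ := hn1
  have hk2 : (s * f1 + t * f2 + 2) / 2 = k + 1 := by omega
  rw [hk2]
  let A := cosetPoly s f1 (fun i => (g ^ (e2 * i)) ^ f1)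
  let B := cosetPoly t f2 (fun j => (g ^ (h * (2 * j + 1))) ^ f2)
  have hAm : A.Monic := cosetPoly_monic _ _ hf1p.ne' _
  have hBm : B.Monic := cosetPoly_monic _ _ hf2p.ne' _
  have hA0 : ∀ x, A.eval x = ∏ i ∈ Finset.range s, (x ^ f1 - (g ^ (e2 * i)) ^ f1) :=
    cosetPoly_eval _ _ _
  have hB0 : ∀ x, B.eval x = ∏ j ∈ Finset.range t, (x ^ f2 - w ^ (2 * j + 1)) := by
    intro x
    rw [cosetPoly_eval]
    simp only [hdw]
  have hcard1 : Fintype.card F - 1 = 2 * M := by rw [hF, hq]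
  have hAd : ∀ x i, i < s → x ^ f1 = (g ^ (e2 * i)) ^ f1 → (x * A.derivative.eval x) ^ M = 1 := by
    intro x i hi hx
    rw [cosetPoly_deriv s f1 _ x i hi hx]
    have h1 : x * (f1 * x ^ (f1 - 1) * ∏ j ∈ (Finset.range s).erase i,
        ((g ^ (e2 * i)) ^ f1 - (g ^ (e2 * j)) ^ f1)) = f1 * x ^ f1 * ∏ j ∈ (Finset.range s).erase i,
        ((g ^ (e2 * i)) ^ f1 - (g ^ (e2 * j)) ^ f1) := by
      have : x ^ f1 = x ^ (f1 - 1) * x := by rw [← pow_succ]; congr 1; omega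
      rw [this]
      ring
    rw [h1, mul_pow, mul_pow, hfM e1 f1 hq1, hx, hcM, one_mul, one_mul, ← Finset.prod_pow]
    apply Finset.prod_eq_one
    intro j hj
    rw [Finset.mem_erase, Finset.mem_range] at hj
    exact hsumM _ _ (hcne i hi j hj.2 (Ne.symm hj.1)) (hcr i) (hcr j)
  have hBd : ∀ x i, i < t → x ^ f2 = w ^ (2 * i + 1) → (x * B.derivative.eval x) ^ M = 1 := by
    intro x i hi hx
    rw [cosetPoly_deriv t f2 _ x i hi (by rw [hx, hdw])]
    simp only [hdw]
    have h1 : x * (f2 * x ^ (f2 - 1) * ∏ j ∈ (Finset.range t).erase i,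
        (w ^ (2 * i + 1) - w ^ (2 * j + 1))) = f2 * x ^ f2 * ∏ j ∈ (Finset.range t).erase i,
        (w ^ (2 * i + 1) - w ^ (2 * j + 1)) := by
      have : x ^ f2 = x ^ (f2 - 1) * x := by rw [← pow_succ]; congr 1; omega
      rw [this]
      ring
    rw [h1, mul_pow, mul_pow, hfM e2 f2 hq2, hx, hwsq, one_mul, one_mul, ← Finset.prod_pow]
    rw [Finset.prod_congr rfl (g := fun _ => (-1 : F) ^ R)]
    · rw [Finset.prod_const, Finset.card_erase_of_mem (Finset.mem_range.2 hi), Finset.card_range,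
        ← pow_mul]
      exact h4'.neg_one_pow
    · intro j hj
      rw [Finset.mem_erase, Finset.mem_range] at hj
      rw [← hdiff _ _ (hdne i hi j hj.2 (Ne.symm hj.1))]
      have : Even (E * (2 * i + 1 + (2 * j + 1))) := ⟨E * (i + j + 1), by ring⟩
      rw [this.neg_one_pow, mul_one]
  have hBA : ∀ x i, x ^ f1 = (g ^ (e2 * i)) ^ f1 → (B.eval x) ^ M = 1 := by
    intro x i hx
    obtain ⟨m, hm⟩ := hrA x i hx
    rw [hB0, hm, ← Finset.prod_pow]
    rw [Finset.prod_congr rfl (g := fun _ => (-1 : F) ^ (R + E))]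
    · rw [Finset.prod_const, Finset.card_range, ← pow_mul]
      apply Even.neg_one_pow
      convert heven' using 1
      ring
    · intro j hj
      have h1 := hdiff _ _ (hdisj m j)
      have h2 : (-1 : F) ^ (E * (2 * m + (2 * j + 1))) = (-1) ^ E := by
        have : E * (2 * m + (2 * j + 1)) = 2 * (E * (m + j)) + E := by ring
        rw [this, pow_add, pow_mul]
        simp
      rw [h2] at h1
      rw [pow_add (-1 : F) R E, ← h1, mul_assoc, ← pow_add]
      rw [Even.neg_one_pow ⟨E, rfl⟩, mul_one]
  have hAB : ∀ x j, x ^ f2 = w ^ (2 * j + 1) → (A.eval x) ^ M = 1 := by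
    intro x j hx
    rw [hA0, ← Finset.prod_pow]
    apply Finset.prod_eq_one
    intro i hi
    apply hsumM _ _ _ (hrB x j hx) (hcr i)
    intro hx'
    exact hABne x i j hx' hx
  refine code_of_poly (s * f1 + t * f2 + 1) (k + 1) (by omega) (Polynomial.X * A * B)
    ((Polynomial.monic_X.mul hAm).mul hBm) ?_ ?_ ?_
  · refine Polynomial.Splits.mul (Polynomial.Splits.mul Polynomial.Splits.X ?_) ?_
    · exact cosetPoly_splits s f1 (by rw [hcard1, hq1]; exact dvd_mul_left _ _) _
        (fun i => pow_ne_zero _ hg_ne)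
    · exact cosetPoly_splits t f2 (by rw [hcard1, hq2]; exact dvd_mul_left _ _) _
        (fun i => pow_ne_zero _ hg_ne)
  · rw [(Polynomial.monic_X.mul hAm).natDegree_mul hBm, Polynomial.monic_X.natDegree_mul hAm,
      cosetPoly_natDegree, cosetPoly_natDegree, Polynomial.natDegree_X]
    ring
  · intro x hx
    apply hfinal
    have hder : (Polynomial.X * A * B).derivative.eval x = A.eval x * B.eval x
        + (x * A.derivative.eval x) * B.eval x + (x * B.derivative.eval x) * A.eval x := by
      simp only [Polynomial.derivative_mul, Polynomial.derivative_X, Polynomial.eval_add,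
        Polynomial.eval_mul, Polynomial.eval_X, Polynomial.eval_one]
      ring
    rw [hder]
    simp only [Polynomial.eval_mul, Polynomial.eval_X, mul_eq_zero] at hx
    rcases hx with (hx | hx) | hx
    · rw [hx, zero_mul, zero_mul, zero_mul, zero_mul, add_zero, add_zero, mul_pow, hA0, hB0,
        ← Finset.prod_pow, ← Finset.prod_pow, Finset.prod_eq_one, Finset.prod_eq_one, one_mul]
      · intro j _
        rw [zero_pow hf2p.ne', zero_sub, hMe.neg_pow, hwsq]
      · intro i _
        rw [zero_pow hf1p.ne', zero_sub, hMe.neg_pow, hcM]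
    · rw [hx, zero_mul, mul_zero, zero_add, add_zero, mul_pow]
      rw [hA0, Finset.prod_eq_zero_iff] at hx
      obtain ⟨i, hi, hx⟩ := hx
      rw [hAd x i (Finset.mem_range.1 hi) (sub_eq_zero.1 hx), hBA x i (sub_eq_zero.1 hx), one_mul]
    · rw [hx, mul_zero, mul_zero, zero_add, zero_add, mul_pow]
      rw [hB0, Finset.prod_eq_zero_iff] at hx
      obtain ⟨i, hi, hx⟩ := hx
      rw [hBd x i (Finset.mem_range.1 hi) (sub_eq_zero.1 hx), hAB x i (sub_eq_zero.1 hx), one_mul]
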